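/- arXiv:1305.0018 — 3 statements merged into one kernel-verified Lean document; each statement's English description precedes it below -/
import Mathlib

section
/- Let n ∈ ℕ, A an n×n real matrix, and v ∈ ℝⁿ, and let d_k (k ≥ 0) be the determinants of the path-extended matrices M_k. Then for every k ≥ 0 one has the closed form d_k = d_0 + k·(d_1 − d_0); in particular the sequence d_k is an arithmetic progression in k. -/
/-- The path-extended matrix `M_k`: the top-left `n × n` block is `A`; the first
appended index is coupled to the original indices by `v`; appended diagonal entries
are `2`; consecutive appended indices are coupled by `-1`; all other new entries
vanish.  For `k = 0` this is just `A` (reindexed along `Fin (n + 0)`). -/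
def pathExt (n : ℕ) (A : Matrix (Fin n) (Fin n) ℝ) (v : Fin n → ℝ) (k : ℕ) :
    Matrix (Fin (n + k)) (Fin (n + k)) ℝ :=
  Matrix.of fun i j =>
    if hi : (i : ℕ) < n then
      if hj : (j : ℕ) < n then A ⟨i, hi⟩ ⟨j, hj⟩
      else if (j : ℕ) = n then v ⟨i, hi⟩ else 0
    else
      if hj : (j : ℕ) < n then
        if (i : ℕ) = n then v ⟨j, hj⟩ else 0
      else
        if (i : ℕ) = (j : ℕ) then 2
        else if (i : ℕ) + 1 = (j : ℕ) ∨ (j : ℕ) + 1 = (i : ℕ) then -1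
        else 0

/-- The determinants `d_k = det M_k` of the path-extended matrices. -/
def pathDet (n : ℕ) (A : Matrix (Fin n) (Fin n) ℝ) (v : Fin n → ℝ) (k : ℕ) : ℝ :=
  (pathExt n A v k).det

/-!
Expanding the determinant along the last row, and then the one surviving off-diagonal minor along
its last column, gives `d (k + 2) = 2 * d (k + 1) - (-1) * (-1) * d k`. Hence the consecutive
differences of `d` are all equal. The original block enters only through `d 0` and `d 1`, and of
the coupling between consecutive path nodes only the product of its two entries matters.
-/

theorem eq_add_nsmul_of_add_two_sub_eq {G : Type*} [AddCommGroup G] {f : ℕ → G}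
    (hf : ∀ k, f (k + 2) - f (k + 1) = f (k + 1) - f k) (k : ℕ) :
    f k = f 0 + k • (f 1 - f 0) := by
  have hdiff : ∀ k, f (k + 1) - f k = f 1 - f 0 := fun k => by
    induction k with
    | zero => rfl
    | succ k ih => rw [hf, ih]
  induction k with
  | zero => rw [zero_nsmul, add_zero]
  | succ k ih => rw [succ_nsmul, ← add_assoc, ← ih, ← hdiff k, add_sub_cancel]

section Determinant

variable {R : Type*} [CommRing R] {m : ℕ}

theorem det_of_offDiag_last_col_eq_zero (M : Matrix (Fin (m + 1)) (Fin (m + 1)) R)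
    (hcol : ∀ i : Fin m, M i.castSucc (Fin.last m) = 0) :
    M.det = M (Fin.last m) (Fin.last m) * (M.submatrix Fin.castSucc Fin.castSucc).det := by
  rw [Matrix.det_succ_column M (Fin.last m), Fin.sum_univ_castSucc]
  simp only [hcol, mul_zero, zero_mul, Finset.sum_const_zero, zero_add, Fin.succAbove_last,
    Even.neg_one_pow ⟨_, rfl⟩, one_mul]

theorem succAbove_castSucc_last_comp_castSucc :
    (Fin.last m).castSucc.succAbove ∘ Fin.castSucc = Fin.castSucc ∘ Fin.castSucc :=
  funext fun i => Fin.succAbove_of_castSucc_lt _ _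
    (Fin.castSucc_lt_castSucc_iff.mpr (Fin.castSucc_lt_last i))

theorem det_of_offTridiag_last_row_col_eq_zero (M : Matrix (Fin (m + 2)) (Fin (m + 2)) R)
    (hrow : ∀ j : Fin m, M (Fin.last (m + 1)) j.castSucc.castSucc = 0)
    (hcol : ∀ i : Fin m, M i.castSucc.castSucc (Fin.last (m + 1)) = 0) :
    M.det =
      M (Fin.last (m + 1)) (Fin.last (m + 1)) * (M.submatrix Fin.castSucc Fin.castSucc).det -
        M (Fin.last (m + 1)) (Fin.last m).castSucc * M (Fin.last m).castSucc (Fin.last (m + 1)) *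
          ((M.submatrix Fin.castSucc Fin.castSucc).submatrix Fin.castSucc Fin.castSucc).det := by
  have hskip : (Fin.last m).castSucc.succAbove (Fin.last m) = Fin.last (m + 1) := by
    rw [Fin.succAbove_castSucc_self, Fin.succ_last]
  have hminor : (M.submatrix Fin.castSucc (Fin.last m).castSucc.succAbove).det =
      M (Fin.last m).castSucc (Fin.last (m + 1)) *
        ((M.submatrix Fin.castSucc Fin.castSucc).submatrix Fin.castSucc Fin.castSucc).det := by
    have hminor_col (i : Fin m) :
        M.submatrix Fin.castSucc (Fin.last m).castSucc.succAbove i.castSucc (Fin.last m) = 0 := by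
      rw [Matrix.submatrix_apply, hskip, hcol]
    rw [det_of_offDiag_last_col_eq_zero _ hminor_col, Matrix.submatrix_apply, hskip,
      Matrix.submatrix_submatrix, Matrix.submatrix_submatrix,
      succAbove_castSucc_last_comp_castSucc]
  have hsign : (-1 : R) ^ (m + 1 + m) = -1 := Odd.neg_one_pow ⟨m, by ring⟩
  rw [Matrix.det_succ_row M (Fin.last (m + 1)), Fin.sum_univ_castSucc, Fin.sum_univ_castSucc]
  simp only [hrow, mul_zero, zero_mul, Finset.sum_const_zero, zero_add, Fin.succAbove_last,
    Fin.val_last, Fin.val_castSucc, hminor, hsign, Even.neg_one_pow ⟨_, rfl⟩]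
  ring

end Determinant

/-- A family of matrices `M k` of sizes `n + k`, each extending the previous one by one index, such
that from the second new index on the diagonal entry is `2` and the index is coupled only to its
predecessor. The two coupling entries are required to have product `1`, which covers the entries
`-1` of a path; the coupling of the first new index to the original block is arbitrary. -/
structure IsPathExtension {R : Type*} [CommRing R] {n : ℕ}
    (M : ∀ k : ℕ, Matrix (Fin (n + k)) (Fin (n + k)) R) : Prop where
  submatrix_castSucc : ∀ k, (M (k + 1)).submatrix Fin.castSucc Fin.castSucc = M k
  last_last : ∀ k, M (k + 2) (Fin.last (n + k + 1)) (Fin.last (n + k + 1)) = 2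
  coupling : ∀ k, M (k + 2) (Fin.last (n + k + 1)) (Fin.last (n + k)).castSucc *
    M (k + 2) (Fin.last (n + k)).castSucc (Fin.last (n + k + 1)) = 1
  last_row : ∀ k (j : Fin (n + k)), M (k + 2) (Fin.last (n + k + 1)) j.castSucc.castSucc = 0
  last_col : ∀ k (i : Fin (n + k)), M (k + 2) i.castSucc.castSucc (Fin.last (n + k + 1)) = 0

theorem IsPathExtension.det_add_two {R : Type*} [CommRing R] {n : ℕ}
    {M : ∀ k : ℕ, Matrix (Fin (n + k)) (Fin (n + k)) R} (hM : IsPathExtension M) (k : ℕ) :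
    (M (k + 2)).det = 2 * (M (k + 1)).det - (M k).det := by
  have h := det_of_offTridiag_last_row_col_eq_zero (m := n + k) (M (k + 2))
    (hM.last_row k) (hM.last_col k)
  rwa [hM.last_last, hM.coupling, one_mul, hM.submatrix_castSucc (k + 1),
    hM.submatrix_castSucc k] at h

theorem isPathExtension_pathExt (n : ℕ) (A : Matrix (Fin n) (Fin n) ℝ) (v : Fin n → ℝ) :
    IsPathExtension (pathExt n A v) where
  submatrix_castSucc _ := rfl
  last_last k := by simp [pathExt, add_assoc]
  coupling k := by simp [pathExt, add_assoc]
  last_row k j := by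
    have hj := j.isLt
    simp only [pathExt, Matrix.of_apply, Fin.val_last, Fin.val_castSucc]
    split_ifs <;> first | rfl | omega
  last_col k i := by
    have hi := i.isLt
    simp only [pathExt, Matrix.of_apply, Fin.val_last, Fin.val_castSucc]
    split_ifs <;> first | rfl | omega

theorem pathDet_arithmetic_general {R : Type*} [CommRing R] {n : ℕ}
    {M : ∀ k : ℕ, Matrix (Fin (n + k)) (Fin (n + k)) R} (hM : IsPathExtension M) (k : ℕ) :
    (M k).det = (M 0).det + (k : R) * ((M 1).det - (M 0).det) := by
  have hdiff : ∀ k, (M (k + 2)).det - (M (k + 1)).det = (M (k + 1)).det - (M k).det := fun k => by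
    rw [hM.det_add_two]
    ring
  rw [← nsmul_eq_mul]
  exact eq_add_nsmul_of_add_two_sub_eq (f := fun k => (M k).det) hdiff k

/-- the determinants of the path-extended matrices form an arithmetic
progression: `d_k = d_0 + k (d_1 - d_0)` for every `k ≥ 0`. -/
theorem pathDet_arithmetic (n : ℕ) (A : Matrix (Fin n) (Fin n) ℝ) (v : Fin n → ℝ) :
    ∀ k : ℕ, pathDet n A v k =
      pathDet n A v 0 + (k : ℝ) * (pathDet n A v 1 - pathDet n A v 0) := by
  intro k
  exact pathDet_arithmetic_general (isPathExtension_pathExt n A v) k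
end

section
/- Let n ∈ ℕ, A an n×n real matrix, v ∈ ℝⁿ, d_k the determinants of the path-extended matrices M_k, and B_0 the bordered matrix with corner entry 0. Then for every integer D ≥ 3 one has the identity d_{D−2} = (D−1)·det A + (D−2)·det B_0. -/
/-- The bordered matrix `B_a`: top-left `n × n` block is `A`, the last row and
column off the corner are given by `v`, and the bottom-right corner entry is `a`.
`B_0` is the Cartan matrix of the Borcherds–Kac–Moody superalgebra. -/
def bordered (n : ℕ) (A : Matrix (Fin n) (Fin n) ℝ) (v : Fin n → ℝ) (a : ℝ) :
    Matrix (Fin (n + 1)) (Fin (n + 1)) ℝ :=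
  Matrix.of fun i j =>
    if hi : (i : ℕ) < n then
      if hj : (j : ℕ) < n then A ⟨i, hi⟩ ⟨j, hj⟩ else v ⟨i, hi⟩
    else
      if hj : (j : ℕ) < n then v ⟨j, hj⟩ else a

/-!
Allow arbitrary diagonal entries `t` on the path. Lengthening a nonempty path by one node borders
the matrix by a row and a column that vanish off their last entry `-1`. The corner `t` of the border
contributes `t * d_{k+1}`; with corner `0`, exchanging the last two rows leaves a block triangular
matrix and contributes `-d_k`. Hence `d_{k+2} = t * d_{k+1} - d_k`, the recurrence of the rescaled
Chebyshev polynomials `S_k`, so that `d_k = S_k(t) * det A + S_{k-1}(t) * det B_0`. At `t = 2` one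
has `S_k(2) = k + 1`.
-/

section Bordering

variable {R : Type*} {n : ℕ}

/-- The block matrix `[[A, u], [v, a]]` obtained from `A` by appending the column `u`, the row `v`
and the corner entry `a`. It is indexed by `Fin (n + 1)` rather than by `Fin n ⊕ Unit` so that
bordering can be iterated, and Laplace expansion applied, without reindexing. -/
def bordering (A : Matrix (Fin n) (Fin n) R) (u v : Fin n → R) (a : R) :
    Matrix (Fin (n + 1)) (Fin (n + 1)) R :=
  Matrix.of (Fin.snoc (fun i => Fin.snoc (A i) (u i)) (Fin.snoc v a))

variable (A : Matrix (Fin n) (Fin n) R) (u v : Fin n → R) (a : R)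

@[simp]
theorem bordering_castSucc_castSucc (i j : Fin n) :
    bordering A u v a i.castSucc j.castSucc = A i j := by
  simp [bordering]

@[simp]
theorem bordering_castSucc_last (i : Fin n) :
    bordering A u v a i.castSucc (Fin.last n) = u i := by
  simp [bordering]

@[simp]
theorem bordering_last_castSucc (j : Fin n) :
    bordering A u v a (Fin.last n) j.castSucc = v j := by
  simp [bordering]

@[simp]
theorem bordering_last_last : bordering A u v a (Fin.last n) (Fin.last n) = a := by
  simp [bordering]

variable {A u v a} in
theorem eq_bordering {M : Matrix (Fin (n + 1)) (Fin (n + 1)) R}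
    (block : ∀ i j : Fin n, M i.castSucc j.castSucc = A i j)
    (column : ∀ i : Fin n, M i.castSucc (Fin.last n) = u i)
    (row : ∀ j : Fin n, M (Fin.last n) j.castSucc = v j)
    (corner : M (Fin.last n) (Fin.last n) = a) :
    M = bordering A u v a := by
  ext i j
  cases i using Fin.lastCases <;> cases j using Fin.lastCases <;> simp [*]

variable [CommRing R]

theorem det_bordering_eq_mul_det_add :
    (bordering A u v a).det = a * A.det + (bordering A u v 0).det := by
  have minor_last : (bordering A u v a).submatrix Fin.castSucc Fin.castSucc = A := by
    ext i j
    simp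
  have minor_eq (f : Fin n → Fin (n + 1)) :
      (bordering A u v a).submatrix Fin.castSucc f =
        (bordering A u v 0).submatrix Fin.castSucc f := by
    ext i j
    simp [bordering]
  rw [Matrix.det_succ_row _ (Fin.last n), Matrix.det_succ_row _ (Fin.last n),
    Fin.sum_univ_castSucc, Fin.sum_univ_castSucc]
  simp [← minor_eq, minor_last, add_comm]

theorem det_bordering_zero_column : (bordering A 0 v a).det = a * A.det := by
  rw [det_bordering_eq_mul_det_add, add_eq_left]
  refine Matrix.det_eq_zero_of_column_eq_zero (Fin.last n) fun i => ?_
  cases i using Fin.lastCases <;> simp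

theorem det_bordering_zero_row : (bordering A u 0 a).det = a * A.det := by
  rw [det_bordering_eq_mul_det_add, add_eq_left]
  refine Matrix.det_eq_zero_of_row_eq_zero (Fin.last n) fun j => ?_
  cases j using Fin.lastCases <;> simp

theorem bordering_bordering_snoc_zero_submatrix_swap (b c : R) :
    (bordering (bordering A u v a) (Fin.snoc 0 b) (Fin.snoc 0 c) 0).submatrix
        (Equiv.swap (Fin.last n).castSucc (Fin.last (n + 1))) id =
      bordering (bordering A u 0 c) 0 (Fin.snoc v a) b := by
  have fixed (i : Fin n) : Equiv.swap (Fin.last n).castSucc (Fin.last (n + 1))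
      i.castSucc.castSucc = i.castSucc.castSucc :=
    Equiv.swap_apply_of_ne_of_ne (by simp) (by simp)
  ext i j
  cases i using Fin.lastCases with
  | last =>
    cases j using Fin.lastCases with
    | last => simp
    | cast j => cases j using Fin.lastCases <;> simp
  | cast i =>
    cases i using Fin.lastCases <;> cases j using Fin.lastCases with
    | last => simp [fixed]
    | cast j => cases j using Fin.lastCases <;> simp [fixed]

theorem det_bordering_bordering_snoc_zero (b c d : R) :
    (bordering (bordering A u v a) (Fin.snoc 0 b) (Fin.snoc 0 c) d).det =
      d * (bordering A u v a).det - b * c * A.det := by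
  have corner_zero :
      (bordering (bordering A u v a) (Fin.snoc 0 b) (Fin.snoc 0 c) 0).det = -(b * c * A.det) := by
    have ne : (Fin.last n).castSucc ≠ Fin.last (n + 1) := by simp
    have swapped := Matrix.det_permute (Equiv.swap (Fin.last n).castSucc (Fin.last (n + 1)))
      (bordering (bordering A u v a) (Fin.snoc 0 b) (Fin.snoc 0 c) 0)
    rw [bordering_bordering_snoc_zero_submatrix_swap, det_bordering_zero_column,
      det_bordering_zero_row, Equiv.Perm.sign_swap ne] at swapped
    push_cast at swapped
    linear_combination swapped
  rw [det_bordering_eq_mul_det_add, corner_zero, sub_eq_add_neg]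

end Bordering

section PathExtension

variable {R : Type*} [CommRing R] {n : ℕ}

/-- The entries coupling the `k`-th node of a path, counted from `k = 0`, to the `n` original
indices and the `k` earlier nodes: the first node is coupled to the original indices by `v`, every
later node only to its predecessor, by `-1`. -/
def pathCoupling (v : Fin n → R) : ∀ k : ℕ, Fin (n + k) → R
  | 0 => v
  | _ + 1 => Fin.snoc 0 (-1)

theorem pathCoupling_apply (v : Fin n → R) (k : ℕ) (i : Fin (n + k)) :
    pathCoupling v k i =
      if hi : (i : ℕ) < n then if k = 0 then v ⟨i, hi⟩ else 0
      else if (i : ℕ) + 1 = n + k then -1 else 0 := by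
  cases k with
  | zero => simp [pathCoupling]
  | succ k =>
    rcases Fin.eq_castSucc_or_eq_last (n := n + k) i with ⟨i, rfl⟩ | rfl
    · simp only [pathCoupling, Fin.snoc_castSucc, Pi.zero_apply, Fin.val_castSucc]
      grind
    · simp [pathCoupling, add_assoc]

/-- The extension of `A` by a path of `k` nodes with diagonal entries `t`, built one node at a time.
The first node is coupled to `A` by the column `u` and the row `v`, which may differ; the matrix
`M_k` is the case `u = v`, `t = 2` over `ℝ`. -/
def pathExtension (A : Matrix (Fin n) (Fin n) R) (u v : Fin n → R) (t : R) :
    ∀ k : ℕ, Matrix (Fin (n + k)) (Fin (n + k)) R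
  | 0 => A
  | k + 1 => bordering (pathExtension A u v t k) (pathCoupling u k) (pathCoupling v k) t

theorem det_pathExtension_add_two (A : Matrix (Fin n) (Fin n) R) (u v : Fin n → R) (t : R) (k : ℕ) :
    (pathExtension A u v t (k + 2)).det =
      t * (pathExtension A u v t (k + 1)).det - (pathExtension A u v t k).det := by
  rw [pathExtension, pathExtension, pathCoupling, pathCoupling,
    det_bordering_bordering_snoc_zero]
  ring

open Polynomial.Chebyshev in
theorem pathDet_eq_detA_detB_general (A : Matrix (Fin n) (Fin n) R) (u v : Fin n → R) (t : R)
    (k : ℕ) :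
    (pathExtension A u v t k).det =
      (S R k).eval t * A.det + (S R (k - 1)).eval t * (bordering A u v 0).det := by
  induction k using Nat.twoStepInduction with
  | zero => simp [pathExtension]
  | one => simpa [pathExtension, pathCoupling] using det_bordering_eq_mul_det_add A u v t
  | more k ih₀ ih₁ =>
    have S_top : S R ((k + 2 : ℕ) : ℤ) = .X * S R ((k + 1 : ℕ) : ℤ) - S R k := by
      exact_mod_cast S_add_two R k
    have S_pred : S R (((k + 2 : ℕ) : ℤ) - 1) =
        .X * S R (((k + 1 : ℕ) : ℤ) - 1) - S R ((k : ℤ) - 1) := by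
      convert S_add_two R ((k : ℤ) - 1) using 3 <;> grind
    rw [det_pathExtension_add_two, ih₀, ih₁, S_top, S_pred]
    simp only [Polynomial.eval_sub, Polynomial.eval_mul, Polynomial.eval_X]
    ring

end PathExtension

section PathExt

variable {n : ℕ} (A : Matrix (Fin n) (Fin n) ℝ) (v : Fin n → ℝ)

theorem bordered_eq_bordering (a : ℝ) :
    bordered n A v a = bordering A v v a := by
  refine eq_bordering ?_ ?_ ?_ ?_ <;> simp [bordered]

theorem pathExt_succ (k : ℕ) :
    pathExt n A v (k + 1) =
      bordering (pathExt n A v k) (pathCoupling v k) (pathCoupling v k) 2 := by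
  refine eq_bordering (fun i j => ?_) (fun i => ?_) (fun j => ?_) ?_
  · simp [pathExt]
  · simp only [pathExt, pathCoupling_apply, Matrix.of_apply, Fin.val_castSucc, Fin.val_last]
    grind
  · simp only [pathExt, pathCoupling_apply, Matrix.of_apply, Fin.val_castSucc, Fin.val_last]
    grind
  · simp [pathExt]

theorem pathExt_eq_pathExtension (k : ℕ) :
    pathExt n A v k = pathExtension A v v 2 k := by
  induction k with
  | zero =>
    ext i j
    simp [pathExt, pathExtension]
  | succ k ih => rw [pathExt_succ, ih, pathExtension]

end PathExt

/-- for every integer `D ≥ 3` one has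
`d_{D-2} = (D-1) · det A + (D-2) · det B_0`. -/
theorem pathDet_eq_detA_detB (n : ℕ) (A : Matrix (Fin n) (Fin n) ℝ) (v : Fin n → ℝ) :
    ∀ D : ℕ, 3 ≤ D →
      pathDet n A v (D - 2) =
        ((D : ℝ) - 1) * A.det + ((D : ℝ) - 2) * (bordered n A v 0).det := by
  intro D hD
  obtain ⟨k, rfl⟩ := Nat.exists_eq_add_of_le' (show 2 ≤ D by omega)
  rw [Nat.add_sub_cancel, pathDet, pathExt_eq_pathExtension, pathDet_eq_detA_detB_general,
    bordered_eq_bordering, Polynomial.Chebyshev.S_eval_two, Polynomial.Chebyshev.S_eval_two]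
  push_cast
  ring
end

section
/- Let n ∈ ℕ, A an n×n real matrix, v ∈ ℝⁿ, d_k the determinants of the path-extended matrices M_k, and B_0 the bordered matrix with corner entry 0. Then for every integer D ≥ 3: d_{D−2} = 0 if and only if det B_0 = −((D−1)/(D−2))·det A. (This is the determinant criterion underlying Theorem 1 of the paper: the Kac–Moody algebra obtained by appending D−2 nodes is affine precisely when the Borcherds–Kac–Moody Cartan matrix B_0 satisfies det B_0 = −((D−1)/(D−2))·det A.) -/
/-! Expanding a bordered determinant along its border gives
`det B_a = a · det A - v ⬝ adj(A) v`. Since `M_1 = B_2`, this yields `d_1 = det B_0 + 2 d_0`.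
For `k ≥ 0`, the matrix `M_{k+2}` is `M_{k+1}` bordered by `-e_last` with corner `2`, and the last
diagonal entry of `adj(M_{k+1})` is `d_k`, so `d_{k+2} = 2 d_{k+1} - d_k`. The `d_k` thus form an
arithmetic progression, `d_k = det A + k (det B_0 + det A)`. -/

section BorderedDeterminant

open Matrix

variable {R : Type*} [CommRing R]

theorem det_submatrix_castSucc_succAbove_castSucc {n : ℕ}
    (M : Matrix (Fin (n + 2)) (Fin (n + 2)) R) (j : Fin (n + 1)) :
    (M.submatrix Fin.castSucc j.castSucc.succAbove).det =
      (-1) ^ (n + j : ℕ) * ((M.submatrix Fin.castSucc Fin.castSucc).adjugate *ᵥ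
        fun i => M i.castSucc (Fin.last (n + 1))) j := by
  have submatrix_minor (i : Fin (n + 1)) :
      (M.submatrix Fin.castSucc j.castSucc.succAbove).submatrix i.succAbove Fin.castSucc =
        (M.submatrix Fin.castSucc Fin.castSucc).submatrix i.succAbove j.succAbove := by
    ext
    simp
  have sign (i : Fin (n + 1)) :
      (-1 : R) ^ (i + n : ℕ) = (-1) ^ (n + j : ℕ) * (-1) ^ (i + j : ℕ) := by
    rw [← pow_add, show n + j + (i + j) = i + n + 2 * (j : ℕ) by ring,
      pow_add (-1) (i + n : ℕ), pow_mul, neg_one_sq, one_pow, mul_one]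
  rw [det_succ_column _ (Fin.last n), mulVec, dotProduct, Finset.mul_sum]
  refine Finset.sum_congr rfl fun i _ => ?_
  rw [Fin.succAbove_last, submatrix_minor, adjugate_fin_succ_eq_det_submatrix, Fin.val_last, sign,
    submatrix_apply, Fin.succAbove_ne_last_last (Fin.castSucc_lt_last j).ne]
  ring

theorem det_eq_corner_mul_det_sub_dotProduct_adjugate_mulVec {n : ℕ}
    (M : Matrix (Fin (n + 1)) (Fin (n + 1)) R) :
    M.det = M (Fin.last n) (Fin.last n) * (M.submatrix Fin.castSucc Fin.castSucc).det -
      (fun j => M (Fin.last n) j.castSucc) ⬝ᵥ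
        ((M.submatrix Fin.castSucc Fin.castSucc).adjugate *ᵥ
          fun i => M i.castSucc (Fin.last n)) := by
  cases n with
  | zero => simp [dotProduct]
  | succ n =>
    have sign (j : Fin (n + 1)) : (-1 : R) ^ (n + 1 + j : ℕ) * (-1) ^ (n + j : ℕ) = -1 := by
      rw [← pow_add]
      exact Odd.neg_one_pow ⟨n + j, by ring⟩
    rw [det_succ_row M (Fin.last (n + 1)), Fin.sum_univ_castSucc, add_comm, sub_eq_add_neg,
      dotProduct, ← Finset.sum_neg_distrib]
    congr 1
    · simp [Fin.succAbove_last]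
    · refine Finset.sum_congr rfl fun j _ => ?_
      rw [Fin.succAbove_last, det_submatrix_castSucc_succAbove_castSucc, Fin.val_last,
        Fin.val_castSucc]
      linear_combination (M (Fin.last (n + 1)) j.castSucc *
        ((M.submatrix Fin.castSucc Fin.castSucc).adjugate *ᵥ
          fun i => M i.castSucc (Fin.last (n + 1))) j) * sign j

theorem adjugate_last_last {n : ℕ} (M : Matrix (Fin (n + 1)) (Fin (n + 1)) R) :
    M.adjugate (Fin.last n) (Fin.last n) = (M.submatrix Fin.castSucc Fin.castSucc).det := by
  simp [adjugate_fin_succ_eq_det_submatrix]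

theorem det_bordered (n : ℕ) (A : Matrix (Fin n) (Fin n) ℝ) (v : Fin n → ℝ) (a : ℝ) :
    (bordered n A v a).det = a * A.det - v ⬝ᵥ (A.adjugate *ᵥ v) := by
  have submatrix_eq : (bordered n A v a).submatrix Fin.castSucc Fin.castSucc = A := by
    ext
    simp [bordered]
  rw [det_eq_corner_mul_det_sub_dotProduct_adjugate_mulVec, submatrix_eq]
  simp [bordered]

theorem det_bordered_single_last (n : ℕ) (A : Matrix (Fin (n + 1)) (Fin (n + 1)) ℝ) (c a : ℝ) :
    (bordered (n + 1) A (Pi.single (Fin.last n) c) a).det =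
      a * A.det - c ^ 2 * (A.submatrix Fin.castSucc Fin.castSucc).det := by
  rw [det_bordered, single_dotProduct, mulVec_single, ← adjugate_last_last]
  simp only [Pi.smul_apply, col_apply, op_smul_eq_smul, smul_eq_mul]
  ring

end BorderedDeterminant

section PathExtension

variable (n : ℕ) (A : Matrix (Fin n) (Fin n) ℝ) (v : Fin n → ℝ)

theorem pathExt_zero : pathExt n A v 0 = A := by
  ext
  simp [pathExt]

theorem pathExt_one : pathExt n A v 1 = bordered n A v 2 := by
  ext i j
  simp only [pathExt, bordered, Matrix.of_apply]
  grind

theorem pathExt_add_two (k : ℕ) :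
    pathExt n A v (k + 2) =
      bordered (n + k + 1) (pathExt n A v (k + 1)) (Pi.single (Fin.last (n + k)) (-1)) 2 := by
  ext i j
  simp only [pathExt, bordered, Matrix.of_apply, Pi.single_apply, Fin.ext_iff, Fin.val_last]
  grind

theorem submatrix_castSucc_pathExt_succ (k : ℕ) :
    (pathExt n A v (k + 1)).submatrix Fin.castSucc Fin.castSucc = pathExt n A v k := by
  ext
  simp [pathExt]

theorem pathDet_zero : pathDet n A v 0 = A.det :=
  congrArg Matrix.det (pathExt_zero n A v)

theorem pathDet_one : pathDet n A v 1 = (bordered n A v 0).det + 2 * A.det := by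
  rw [pathDet, pathExt_one, det_bordered, det_bordered]
  ring

theorem pathDet_add_two (k : ℕ) :
    pathDet n A v (k + 2) = 2 * pathDet n A v (k + 1) - pathDet n A v k := calc
  _ = (bordered (n + k + 1) (pathExt n A v (k + 1)) (Pi.single (Fin.last (n + k)) (-1)) 2).det :=
    congrArg Matrix.det (pathExt_add_two n A v k)
  _ = 2 * (pathExt n A v (k + 1)).det -
        (-1) ^ 2 * ((pathExt n A v (k + 1)).submatrix Fin.castSucc Fin.castSucc).det :=
    det_bordered_single_last (n + k) (pathExt n A v (k + 1)) (-1) 2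
  _ = 2 * pathDet n A v (k + 1) - pathDet n A v k := by
    rw [submatrix_castSucc_pathExt_succ, neg_one_sq, one_mul, pathDet, pathDet]

theorem pathDet_eq_det_add_mul (k : ℕ) :
    pathDet n A v k = A.det + k * ((bordered n A v 0).det + A.det) := by
  induction k using Nat.twoStepInduction with
  | zero => simp [pathDet_zero]
  | one =>
    rw [pathDet_one]
    push_cast
    ring
  | more k ih ih_succ =>
    rw [pathDet_add_two, ih, ih_succ]
    push_cast
    ring

end PathExtension

/-- for every integer `D ≥ 3`, the determinant of the path-extended
Cartan matrix with `D - 2` appended nodes vanishes (i.e. the extended Kac–Moody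
algebra is affine) if and only if the Borcherds–Kac–Moody Cartan matrix satisfies
`det B_0 = -((D-1)/(D-2)) · det A`. -/
theorem pathDet_eq_zero_iff (n : ℕ) (A : Matrix (Fin n) (Fin n) ℝ) (v : Fin n → ℝ) :
    ∀ D : ℕ, 3 ≤ D →
      (pathDet n A v (D - 2) = 0 ↔
        (bordered n A v 0).det = -(((D : ℝ) - 1) / ((D : ℝ) - 2)) * A.det) := by
  intro D hD
  have hD_real : (3 : ℝ) ≤ D := by exact_mod_cast hD
  have hD_sub : (D : ℝ) - 2 ≠ 0 := by linarith
  rw [pathDet_eq_det_add_mul, Nat.cast_sub (by lia : 2 ≤ D), Nat.cast_two, neg_mul,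
    div_mul_eq_mul_div, ← neg_div, eq_div_iff hD_sub]
  constructor <;> intro h <;> linear_combination h
end
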